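/- arXiv:1605.04934 — 3 statements merged into one kernel-verified Lean document; each statement's English description precedes it below -/
import Mathlib

section
/- Let K ≥ 2 be an integer, let k ∈ {1, …, K}, and let θ = (θ_1, …, θ_K) and θ' = (θ'_1, …, θ'_K) be sorted probability vectors such that θ_1 > θ'_1, θ_k = θ'_k > 0, and θ_{k + 1[k ≠ K]} = θ'_{k + 1[k ≠ K]}. Then the inequality is strict: I_I(θ, k) < I_I(θ', k). -/
open Finset

/-- The interpretability indicator `I_I(θ, k)` for `K` categories, with 1-based
indexing of the sorted proportion `θ`. When `k = K` the second ratio is `θ K / θ K`. -/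
noncomputable def II (K : ℕ) (θ : ℕ → ℝ) (k : ℕ) : ℝ :=
  (1 / 2 : ℝ) * (((K : ℝ) - (k : ℝ)) / ((K : ℝ) - 1) + (if k = K then (1 : ℝ) else 0)) *
    (θ k / θ 1 - θ (k + (if k = K then 0 else 1)) / θ k + 1)

/-- `θ 1 ≥ θ 2 ≥ ⋯ ≥ θ K ≥ 0` and `θ 1 + ⋯ + θ K = 1`. -/
def SortedProbVec (K : ℕ) (θ : ℕ → ℝ) : Prop :=
  (∀ i j, 1 ≤ i → i ≤ j → j ≤ K → θ j ≤ θ i) ∧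
  (∀ i, 1 ≤ i → i ≤ K → 0 ≤ θ i) ∧
  (∑ i ∈ Finset.Icc 1 K, θ i = 1)

theorem II_weight_pos {K k : ℕ} (hK : 2 ≤ K) (hkK : k ≤ K) :
    0 < ((K : ℝ) - (k : ℝ)) / ((K : ℝ) - 1) + (if k = K then (1 : ℝ) else 0) := by
  rcases hkK.eq_or_lt with rfl | hlt
  · simp
  · have hnum : (0 : ℝ) < (K : ℝ) - k := sub_pos.mpr (Nat.cast_lt.mpr hlt)
    have hden : (0 : ℝ) < (K : ℝ) - 1 := sub_pos.mpr (Nat.one_lt_cast.mpr hK)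
    simpa only [if_neg hlt.ne, add_zero] using div_pos hnum hden

theorem II_lt_II_iff_div_lt_div {K k : ℕ} (hK : 2 ≤ K) (hkK : k ≤ K) {θ θ' : ℕ → ℝ}
    (hk : θ k = θ' k)
    (hnext : θ (k + (if k = K then 0 else 1)) = θ' (k + (if k = K then 0 else 1))) :
    II K θ k < II K θ' k ↔ θ k / θ 1 < θ' k / θ' 1 := by
  have hcoeff := mul_pos (one_half_pos (α := ℝ)) (II_weight_pos hK hkK)
  rw [II, II, mul_lt_mul_iff_right₀ hcoeff, hnext, hk, add_lt_add_iff_right, sub_lt_sub_iff_right]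

theorem SortedProbVec.top_pos_of_pos {K k : ℕ} {θ : ℕ → ℝ} (hθ : SortedProbVec K θ)
    (hk1 : 1 ≤ k) (hkK : k ≤ K) (hkpos : 0 < θ k) : 0 < θ 1 :=
  hkpos.trans_le (hθ.1 1 k le_rfl hk1 hkK)

theorem II_strict_antitone_in_top_general {K k : ℕ} (hK : 2 ≤ K) (hkK : k ≤ K) {θ θ' : ℕ → ℝ}
    (htop : 0 < θ' 1) (h1 : θ' 1 < θ 1) (hk : θ k = θ' k) (hkpos : 0 < θ k)
    (hnext : θ (k + (if k = K then 0 else 1)) = θ' (k + (if k = K then 0 else 1))) :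
    II K θ k < II K θ' k := by
  rw [II_lt_II_iff_div_lt_div hK hkK hk hnext, ← hk]
  exact div_lt_div_of_pos_left hkpos htop h1

theorem II_strict_antitone_in_top (K : ℕ) (hK : 2 ≤ K) (k : ℕ) (hk1 : 1 ≤ k) (hkK : k ≤ K)
    (θ θ' : ℕ → ℝ) (hθ : SortedProbVec K θ) (hθ' : SortedProbVec K θ')
    (h1 : θ' 1 < θ 1) (hk : θ k = θ' k) (hkpos : 0 < θ k)
    (hnext : θ (k + (if k = K then 0 else 1)) = θ' (k + (if k = K then 0 else 1))) :
    II K θ k < II K θ' k :=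
  II_strict_antitone_in_top_general hK hkK (hθ'.top_pos_of_pos hk1 hkK (hk ▸ hkpos)) h1 hk hkpos
    hnext
end

section
/- Let K ≥ 2 be an integer, let k ∈ {1, …, K} with k < K, and let θ = (θ_1, …, θ_K) and θ' = (θ'_1, …, θ'_K) be sorted probability vectors such that θ_k > θ'_k > 0, θ_1 = θ'_1, and θ_{k+1} = θ'_{k+1}. Then the inequality is strict: I_I(θ, k) > I_I(θ', k). -/
open Finset

theorem div_sub_div_lt_div_sub_div {F : Type*} [Field F] [LinearOrder F] [IsStrictOrderedRing F]
    {a a' b b' x x' : F} (ha : 0 < a) (haa' : a ≤ a') (hx' : 0 < x') (hx'x : x' < x)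
    (hb' : 0 ≤ b') (hbb' : b ≤ b') : x' / a' - b' / x' < x / a - b / x := by
  have hx : 0 < x := hx'.trans hx'x
  have first_ratio : x' / a' < x / a := div_lt_div₀ hx'x haa' hx.le ha
  have second_ratio : b / x ≤ b' / x' := div_le_div₀ hb' hbb' hx' hx'x.le
  linarith

section InterpretabilityIndicator

variable {K k : ℕ} {θ θ' : ℕ → ℝ}

theorem II_of_lt (hkK : k < K) :
    II K θ k = 1 / 2 * (((K : ℝ) - k) / ((K : ℝ) - 1)) * (θ k / θ 1 - θ (k + 1) / θ k + 1) := by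
  simp [II, hkK.ne]

theorem II_self (hK : θ K ≠ 0) : II K θ K = 1 / 2 * (θ K / θ 1) := by
  simp [II, hK]

theorem II_lt_II_iff_of_lt (hk1 : 1 ≤ k) (hkK : k < K) :
    II K θ' k < II K θ k ↔
      θ' k / θ' 1 - θ' (k + 1) / θ' k < θ k / θ 1 - θ (k + 1) / θ k := by
  have hK : (1 : ℝ) < K := by exact_mod_cast hk1.trans_lt hkK
  have weight_pos : 0 < ((K : ℝ) - k) / ((K : ℝ) - 1) :=
    div_pos (sub_pos.2 (by exact_mod_cast hkK)) (sub_pos.2 hK)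
  rw [II_of_lt hkK, II_of_lt hkK, mul_lt_mul_iff_right₀ (by positivity), add_lt_add_iff_right]

theorem II_self_lt_II_self_iff (hK' : θ' K ≠ 0) (hK : θ K ≠ 0) :
    II K θ' K < II K θ K ↔ θ' K / θ' 1 < θ K / θ 1 := by
  rw [II_self hK', II_self hK, mul_lt_mul_iff_right₀ one_half_pos]

theorem II_strict_monotone_in_kth_general (hk1 : 1 ≤ k) (hkK : k ≤ K)
    (hk : θ' k < θ k) (hkpos : 0 < θ' k) (h1pos : 0 < θ 1) (h1 : θ 1 ≤ θ' 1)
    (hnext_nonneg : k < K → 0 ≤ θ' (k + 1)) (hnext : k < K → θ (k + 1) ≤ θ' (k + 1)) :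
    II K θ' k < II K θ k := by
  obtain rfl | hkK := hkK.eq_or_lt
  · have hkpos' : 0 < θ k := hkpos.trans hk
    exact (II_self_lt_II_self_iff hkpos.ne' hkpos'.ne').2 (div_lt_div₀ hk h1 hkpos'.le h1pos)
  · exact (II_lt_II_iff_of_lt hk1 hkK).2 <|
      div_sub_div_lt_div_sub_div h1pos h1 hkpos hk (hnext_nonneg hkK) (hnext hkK)

end InterpretabilityIndicator

theorem II_strict_monotone_in_kth (K : ℕ) (hK : 2 ≤ K) (k : ℕ) (hk1 : 1 ≤ k) (hkK : k < K)
    (θ θ' : ℕ → ℝ) (hθ : SortedProbVec K θ) (hθ' : SortedProbVec K θ')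
    (hk : θ' k < θ k) (hkpos : 0 < θ' k) (h1 : θ 1 = θ' 1)
    (hnext : θ (k + 1) = θ' (k + 1)) :
    II K θ k > II K θ' k := by
  have h1pos : 0 < θ 1 := (hkpos.trans hk).trans_le (hθ.1 1 k le_rfl hk1 hkK.le)
  exact II_strict_monotone_in_kth_general hk1 hkK.le hk hkpos h1pos h1.le
    (fun _ ↦ hθ'.2.1 (k + 1) k.succ_pos hkK) (fun _ ↦ hnext.le)
end

section
/- Let K ≥ 2 be an integer, let k, k' ∈ {1, …, K} with k < k' < K, and let θ = (θ_1, …, θ_K) and θ' = (θ'_1, …, θ'_K) be sorted probability vectors such that θ_1 = θ'_1, θ_k = θ'_{k'} > 0, and θ_{k+1} = θ'_{k'+1}. Then the inequality is strict: I_I(θ, k) > I_I(θ', k'). -/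
open Finset

theorem SortedProbVec.antitoneOn {K : ℕ} {θ : ℕ → ℝ} (hθ : SortedProbVec K θ) :
    AntitoneOn θ (Set.Icc 1 K) :=
  fun i hi j hj hij => hθ.1 i j hi.1 hij hj.2

theorem II_of_ne {K k : ℕ} (θ : ℕ → ℝ) (hk : k ≠ K) :
    II K θ k = 1 / 2 * (((K : ℝ) - k) / (K - 1)) * (θ k / θ 1 - θ (k + 1) / θ k + 1) := by
  simp only [II, if_neg hk, add_zero]

section OrderedField

variable {𝕜 : Type*} [Field 𝕜] [LinearOrder 𝕜] [IsStrictOrderedRing 𝕜]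

theorem strictAnti_sub_natCast_div (a : 𝕜) {c : 𝕜} (hc : 0 < c) :
    StrictAnti fun n : ℕ => (a - n) / c := fun _ _ hmn =>
  div_lt_div_of_pos_right (sub_lt_sub_left (Nat.cast_lt.2 hmn) a) hc

theorem div_sub_div_add_one_pos {a b c : 𝕜} (ha : 0 < a) (hb : 0 < b) (hcb : c ≤ b) :
    0 < b / a - c / b + 1 := by
  have hba : 0 < b / a := div_pos hb ha
  have hcb' : c / b ≤ 1 := (div_le_one hb).2 hcb
  linarith

end OrderedField

theorem II_strict_antitone_in_index_general {K k k' : ℕ} {θ θ' : ℕ → ℝ} (hk1 : 1 ≤ k)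
    (hkk' : k < k') (hk'K : k' < K) (hθ : AntitoneOn θ (Set.Icc 1 K))
    (h1 : θ 1 = θ' 1) (hk : θ k = θ' k') (hkpos : 0 < θ k)
    (hnext : θ (k + 1) = θ' (k' + 1)) :
    II K θ' k' < II K θ k := by
  have hkK : k < K := hkk'.trans hk'K
  have hK : (0 : ℝ) < K - 1 := sub_pos.2 (Nat.one_lt_cast.2 (hk1.trans_lt hkK))
  have hk_le : θ k ≤ θ 1 := hθ ⟨le_rfl, hk1.trans hkK.le⟩ ⟨hk1, hkK.le⟩ hk1
  have hsucc_le : θ (k + 1) ≤ θ k :=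
    hθ ⟨hk1, hkK.le⟩ ⟨Nat.le_add_left 1 k, hkK⟩ k.le_succ
  have hfactor : 0 < θ k / θ 1 - θ (k + 1) / θ k + 1 :=
    div_sub_div_add_one_pos (hkpos.trans_le hk_le) hkpos hsucc_le
  have hweight : ((K : ℝ) - k') / (K - 1) < (K - k) / (K - 1) :=
    strictAnti_sub_natCast_div (K : ℝ) hK hkk'
  rw [II_of_ne θ hkK.ne, II_of_ne θ' hk'K.ne, ← h1, ← hk, ← hnext]
  exact mul_lt_mul_of_pos_right (mul_lt_mul_of_pos_left hweight one_half_pos) hfactor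

theorem II_strict_antitone_in_index (K : ℕ) (hK : 2 ≤ K) (k k' : ℕ) (hk1 : 1 ≤ k)
    (hkk' : k < k') (hk'K : k' < K)
    (θ θ' : ℕ → ℝ) (hθ : SortedProbVec K θ) (hθ' : SortedProbVec K θ')
    (h1 : θ 1 = θ' 1) (hk : θ k = θ' k') (hkpos : 0 < θ k)
    (hnext : θ (k + 1) = θ' (k' + 1)) :
    II K θ k > II K θ' k' :=
  II_strict_antitone_in_index_general hk1 hkk' hk'K hθ.antitoneOn h1 hk hkpos hnext
end
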